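/- arXiv:1603.07628 — 2 statements merged into one kernel-verified Lean document; each statement's English description precedes it below -/
import Mathlib

section
/- (Power-constrained refinement of Proposition 9, equation (45).) For every n ≥ 1, every random vector X in ℝⁿ with (1/n)·E[‖X‖²] ≤ 1, and every snr > 0, (1/n)·Tr(E[(Cov(X|Y_snr))²]) ≤ (n + 2 − 1/(1+snr)²)/snr². -/
open MeasureTheory ProbabilityTheory Real Matrix

noncomputable section

/-- The observation `Y_snr = √snr · X + Z` as a random vector in `ℝⁿ` (modeled as `Fin n → ℝ`). -/
def obs {Ω : Type*} {n : ℕ} (X Z : Ω → Fin n → ℝ) (snr : ℝ) : Ω → Fin n → ℝ :=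
  fun ω i => Real.sqrt snr * X ω i + Z ω i

/-- The σ-algebra generated by the observation `Y_snr`. -/
def obsSigma {Ω : Type*} [MeasurableSpace Ω] {n : ℕ} (X Z : Ω → Fin n → ℝ) (snr : ℝ) :
    MeasurableSpace Ω :=
  MeasurableSpace.comap (obs X Z snr) inferInstance

/-- Componentwise conditional expectation of a random vector given a sub-σ-algebra `m`. -/
def ceVec {Ω : Type*} {n : ℕ} (m : MeasurableSpace Ω) [MeasurableSpace Ω] (μ : Measure Ω)
    (V : Ω → Fin n → ℝ) : Ω → Fin n → ℝ :=
  fun ω i => (μ[fun ω' => V ω' i | m]) ω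

/-- Entrywise conditional expectation of a random matrix given a sub-σ-algebra `m`. -/
def ceMat {Ω : Type*} {n : ℕ} (m : MeasurableSpace Ω) [MeasurableSpace Ω] (μ : Measure Ω)
    (M : Ω → Matrix (Fin n) (Fin n) ℝ) : Ω → Matrix (Fin n) (Fin n) ℝ :=
  fun ω => Matrix.of fun i j => (μ[fun ω' => M ω' i j | m]) ω

/-- Conditional covariance matrix `Cov(V|m) = E[V Vᵀ|m] − E[V|m]·E[V|m]ᵀ` (entrywise). -/
def covMat {Ω : Type*} {n : ℕ} (m : MeasurableSpace Ω) [MeasurableSpace Ω] (μ : Measure Ω)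
    (V : Ω → Fin n → ℝ) : Ω → Matrix (Fin n) (Fin n) ℝ :=
  fun ω => ceMat m μ (fun ω' => Matrix.vecMulVec (V ω') (V ω')) ω
    - Matrix.vecMulVec (ceVec m μ V ω) (ceVec m μ V ω)

/-- Entrywise expectation of a random matrix. -/
def expMat {Ω : Type*} [MeasurableSpace Ω] {n : ℕ} (μ : Measure Ω)
    (M : Ω → Matrix (Fin n) (Fin n) ℝ) : Matrix (Fin n) (Fin n) ℝ :=
  Matrix.of fun i j => ∫ ω, M ω i j ∂μ

/-- `Tr(E[M])` for a random matrix `M` (expectation entrywise). -/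
def trExp {Ω : Type*} [MeasurableSpace Ω] {n : ℕ} (μ : Measure Ω)
    (M : Ω → Matrix (Fin n) (Fin n) ℝ) : ℝ :=
  Matrix.trace (expMat μ M)


/-- The fourth moment of the standard Gaussian is `3`. -/
lemma integral_pow_four_gaussianReal_zero_one : ∫ x, x ^ 4 ∂gaussianReal 0 1 = 3 := by
  have hderiv : ∀ p p' : ℝ → ℝ, (∀ t, HasDerivAt p (p' t) t) →
      deriv (fun t => p t * rexp (t ^ 2 / 2)) = fun t => (p' t + t * p t) * rexp (t ^ 2 / 2) := by
    intro p p' hp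
    ext t
    have hsq : HasDerivAt (fun t : ℝ => t ^ 2 / 2) t t := by
      simpa using (hasDerivAt_pow 2 t).div_const 2
    rw [((hp t).fun_mul hsq.exp).deriv]
    ring
  have hmgf : mgf (fun x : ℝ => x) (gaussianReal 0 1) = fun t => 1 * rexp (t ^ 2 / 2) := by
    simp [mgf_fun_id_gaussianReal]
  calc ∫ x, x ^ 4 ∂gaussianReal 0 1
      = iteratedDeriv 4 (mgf (fun x => x) (gaussianReal 0 1)) 0 := by
        rw [iteratedDeriv_mgf_zero] <;> simp
    _ = 3 := by
        rw [hmgf, iteratedDeriv_succ, iteratedDeriv_succ, iteratedDeriv_succ, iteratedDeriv_one,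
          hderiv (fun _ => 1) (fun _ => 0) fun t => hasDerivAt_const t 1,
          hderiv (fun t => 0 + t * 1) (fun _ => 1) fun t => by simpa using hasDerivAt_id' t,
          hderiv (fun t => 1 + t * (0 + t * 1)) (fun t => 2 * t) fun t => by
            simpa [← sq] using (hasDerivAt_pow 2 t).const_add 1,
          hderiv (fun t => 2 * t + t * (1 + t * (0 + t * 1))) (fun t => 3 + 3 * t ^ 2) fun t => by
            have h3 := ((hasDerivAt_id t).const_mul 3).fun_add (hasDerivAt_pow 3 t)
            exact (h3.congr_of_eventuallyEq (.of_forall fun u => by simp; ring)).congr_deriv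
              (by norm_num)]
        simp

/-- For a random vector with finite fourth moments and mean `m`, the squared Frobenius norm of the
covariance matrix is at most the expected fourth power of the norm minus `|m|⁴`. -/
lemma sum_sq_covariance_add_le {α ι : Type*} [Fintype ι] [MeasurableSpace α] (ν : Measure α)
    [IsProbabilityMeasure ν] (V : ι → α → ℝ) (hV : ∀ i, Measurable (V i))
    (h4 : ∀ i j, Integrable (fun a => (V i a * V j a) ^ 2) ν) :
    ∑ i, ∑ j, ((∫ a, V i a * V j a ∂ν) - (∫ a, V i a ∂ν) * ∫ a, V j a ∂ν) ^ 2
      + (∑ i, (∫ a, V i a ∂ν) ^ 2) ^ 2 ≤ ∑ i, ∑ j, ∫ a, (V i a * V j a) ^ 2 ∂ν := by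
  have hprod : ∀ i j, MemLp (fun a => V i a * V j a) 2 ν := fun i j =>
    (memLp_two_iff_integrable_sq ((hV i).mul (hV j)).aestronglyMeasurable).2 (h4 i j)
  have hprod1 : ∀ i j, Integrable (fun a => V i a * V j a) ν := fun i j =>
    (hprod i j).integrable one_le_two
  have hsq : ∀ i, MemLp (V i) 2 ν := fun i =>
    (memLp_two_iff_integrable_sq (hV i).aestronglyMeasurable).2 (by simpa [sq] using hprod1 i i)
  have hV1 : ∀ i, Integrable (V i) ν := fun i => (hsq i).integrable one_le_two
  have jensen : ∀ f : α → ℝ, MemLp f 2 ν → (∫ a, f a ∂ν) ^ 2 ≤ ∫ a, f a ^ 2 ∂ν := by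
    intro f hf
    have h0 := variance_nonneg f ν
    rw [variance_eq_sub hf] at h0
    simpa using h0
  set m : ι → ℝ := fun i => ∫ a, V i a ∂ν with hm
  set A : ι → ι → ℝ := fun i j => ∫ a, V i a * V j a ∂ν with hA
  have hA2 : ∑ i, ∑ j, A i j ^ 2 ≤ ∑ i, ∑ j, ∫ a, (V i a * V j a) ^ 2 ∂ν :=
    Finset.sum_le_sum fun i _ => Finset.sum_le_sum fun j _ => jensen _ (hprod i j)
  have hquad : (∑ i, m i ^ 2) ^ 2 ≤ ∑ i, ∑ j, m i * m j * A i j := by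
    have h := jensen (fun a => ∑ i, m i * V i a)
      (memLp_finsetSum _ fun i _ => (hsq i).const_mul (m i))
    have h1 : ∫ a, ∑ i, m i * V i a ∂ν = ∑ i, m i ^ 2 := by
      rw [integral_finsetSum _ fun i _ => (hV1 i).const_mul _]
      simp [integral_const_mul, hm, sq]
    have h2 : ∫ a, (∑ i, m i * V i a) ^ 2 ∂ν = ∑ i, ∑ j, m i * m j * A i j := by
      have : ∀ a, (∑ i, m i * V i a) ^ 2 = ∑ i, ∑ j, m i * m j * (V i a * V j a) := fun a => by
        rw [sq, Finset.sum_mul_sum]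
        exact Finset.sum_congr rfl fun i _ => Finset.sum_congr rfl fun j _ => by ring
      simp_rw [this]
      rw [integral_finsetSum _ fun i _ =>
        integrable_finsetSum _ fun j _ => (hprod1 i j).const_mul _]
      refine Finset.sum_congr rfl fun i _ => ?_
      rw [integral_finsetSum _ fun j _ => (hprod1 i j).const_mul _]
      simp [integral_const_mul, hA]
    rwa [h1, h2] at h
  have hexp : ∑ i, ∑ j, (A i j - m i * m j) ^ 2 =
      ∑ i, ∑ j, A i j ^ 2 - 2 * ∑ i, ∑ j, m i * m j * A i j + (∑ i, m i ^ 2) ^ 2 := by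
    rw [sq (∑ i, m i ^ 2), Finset.sum_mul_sum]
    simp only [Finset.mul_sum, ← Finset.sum_sub_distrib, ← Finset.sum_add_distrib]
    exact Finset.sum_congr rfl fun i _ => Finset.sum_congr rfl fun j _ => by ring
  linarith

section StandardGaussianVector

variable {Ω : Type*} [MeasurableSpace Ω] {μ : Measure Ω} {n : ℕ} {Z : Ω → Fin n → ℝ}

lemma map_eval_eq_gaussianReal (hZ : Measurable Z)
    (hZlaw : Measure.map Z μ = Measure.pi fun _ : Fin n => gaussianReal 0 1) (i : Fin n) :
    μ.map (fun ω => Z ω i) = gaussianReal 0 1 := by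
  rw [← (measurePreserving_eval (fun _ : Fin n => gaussianReal 0 1) i).map_eq, ← hZlaw,
    Measure.map_map (measurable_pi_apply i) hZ]
  rfl

lemma integral_comp_eval_eq_gaussianReal (hZ : Measurable Z)
    (hZlaw : Measure.map Z μ = Measure.pi fun _ : Fin n => gaussianReal 0 1) (i : Fin n)
    {f : ℝ → ℝ} (hf : Measurable f) :
    ∫ ω, f (Z ω i) ∂μ = ∫ x, f x ∂gaussianReal 0 1 := by
  rw [← map_eval_eq_gaussianReal hZ hZlaw i,
    integral_map (by fun_prop) hf.aestronglyMeasurable]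

lemma integral_sq_gaussianReal_zero_one : ∫ x, x ^ 2 ∂gaussianReal 0 1 = 1 := by
  have h := variance_eq_sub (memLp_id_gaussianReal (μ := 0) (v := 1) 2)
  simpa using h.symm

lemma memLp_four_eval (hZ : Measurable Z)
    (hZlaw : Measure.map Z μ = Measure.pi fun _ : Fin n => gaussianReal 0 1) (i : Fin n) :
    MemLp (fun ω => Z ω i) 4 μ := by
  have h := memLp_id_gaussianReal' (μ := 0) (v := 1) 4 (by simp)
  rw [← map_eval_eq_gaussianReal hZ hZlaw i] at h
  exact h.comp_of_map ((measurable_pi_apply i).comp hZ).aemeasurable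

lemma memLp_two_mul_eval (hZ : Measurable Z)
    (hZlaw : Measure.map Z μ = Measure.pi fun _ : Fin n => gaussianReal 0 1) (i j : Fin n) :
    MemLp (fun ω => Z ω i * Z ω j) 2 μ := by
  have : ENNReal.HolderTriple 4 4 2 := ⟨by
    rw [← two_mul, show (4 : ENNReal) = 2 * 2 by norm_num,
      ENNReal.mul_inv (by simp) (by simp), ← mul_assoc,
      ENNReal.mul_inv_cancel (by simp) (by simp), one_mul]⟩
  exact (memLp_four_eval hZ hZlaw j).mul' (memLp_four_eval hZ hZlaw i)

/-- The fourth moment `E‖Z‖⁴ = n (n + 2)` of a standard Gaussian vector. -/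
lemma sum_integral_sq_mul_eval [IsProbabilityMeasure μ] (hZ : Measurable Z)
    (hZlaw : Measure.map Z μ = Measure.pi fun _ : Fin n => gaussianReal 0 1) :
    ∑ i, ∑ j, ∫ ω, (Z ω i * Z ω j) ^ 2 ∂μ = n * (n + 2) := by
  have hind : iIndepFun (fun i ω => Z ω i) μ := by
    rw [iIndepFun_iff_map_fun_eq_pi_map fun i => by fun_prop]
    simp_rw [map_eval_eq_gaussianReal hZ hZlaw]
    exact hZlaw
  have hval : ∀ i j, ∫ ω, (Z ω i * Z ω j) ^ 2 ∂μ = 1 + if i = j then 2 else 0 := by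
    intro i j
    split_ifs with hij
    · subst hij
      have : ∀ ω, (Z ω i * Z ω i) ^ 2 = Z ω i ^ 4 := fun ω => by ring
      simp_rw [this]
      rw [integral_comp_eval_eq_gaussianReal hZ hZlaw i (f := fun x => x ^ 4) (by fun_prop),
        integral_pow_four_gaussianReal_zero_one]
      norm_num
    · have hsq : IndepFun (fun ω => Z ω i ^ 2) (fun ω => Z ω j ^ 2) μ :=
        (hind.indepFun hij).comp (φ := fun x : ℝ => x ^ 2) (ψ := fun x : ℝ => x ^ 2)
          (by fun_prop) (by fun_prop)
      simp_rw [mul_pow]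
      rw [hsq.integral_fun_mul_eq_mul_integral (by fun_prop) (by fun_prop),
        integral_comp_eval_eq_gaussianReal hZ hZlaw i (f := fun x => x ^ 2) (by fun_prop),
        integral_comp_eval_eq_gaussianReal hZ hZlaw j (f := fun x => x ^ 2) (by fun_prop),
        integral_sq_gaussianReal_zero_one]
      norm_num
  simp only [hval, Finset.sum_add_distrib, Finset.sum_const, Finset.card_univ, Fintype.card_fin,
    Finset.sum_ite_eq, Finset.mem_univ, if_true, nsmul_eq_mul]
  ring

end StandardGaussianVector


section CondDistrib

variable {Ω β γ : Type*} [MeasurableSpace Ω] [MeasurableSpace β] [MeasurableSpace γ]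
  [StandardBorelSpace γ] [Nonempty γ] {μ : Measure Ω} [IsFiniteMeasure μ] {Y : Ω → β} {Z : Ω → γ}
  {f : β → γ → ℝ}

lemma ae_integrable_condDistrib (hY : Measurable Y) (hZ : Measurable Z)
    (hf : Measurable (Function.uncurry f)) (hint : Integrable (fun ω => f (Y ω) (Z ω)) μ) :
    ∀ᵐ ω ∂μ, Integrable (f (Y ω)) (condDistrib Z Y μ (Y ω)) :=
  Integrable.condDistrib_ae (f := Function.uncurry f) hY.aemeasurable hZ.aemeasurable
    ((integrable_map_measure hf.aestronglyMeasurable (hY.prodMk hZ).aemeasurable).2 hint)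

lemma condExp_comap_ae_eq_integral_condDistrib (hY : Measurable Y) (hZ : Measurable Z)
    (hf : Measurable (Function.uncurry f)) (hint : Integrable (fun ω => f (Y ω) (Z ω)) μ) :
    μ[fun ω => f (Y ω) (Z ω) | MeasurableSpace.comap Y inferInstance] =ᵐ[μ]
      fun ω => ∫ z, f (Y ω) z ∂condDistrib Z Y μ (Y ω) :=
  condExp_prod_ae_eq_integral_condDistrib (f := Function.uncurry f) hY hZ.aemeasurable
    hf.stronglyMeasurable hint

lemma integrable_integral_condDistrib (hY : Measurable Y) (hZ : Measurable Z)
    (hf : Measurable (Function.uncurry f)) (hint : Integrable (fun ω => f (Y ω) (Z ω)) μ) :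
    Integrable (fun ω => ∫ z, f (Y ω) z ∂condDistrib Z Y μ (Y ω)) μ :=
  integrable_condExp.congr (condExp_comap_ae_eq_integral_condDistrib hY hZ hf hint)

lemma integral_integral_condDistrib (hY : Measurable Y) (hZ : Measurable Z)
    (hf : Measurable (Function.uncurry f)) (hint : Integrable (fun ω => f (Y ω) (Z ω)) μ) :
    ∫ ω, ∫ z, f (Y ω) z ∂condDistrib Z Y μ (Y ω) ∂μ = ∫ ω, f (Y ω) (Z ω) ∂μ := by
  rw [← integral_congr_ae (condExp_comap_ae_eq_integral_condDistrib hY hZ hf hint),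
    integral_condExp hY.comap_le]

end CondDistrib

section Channel

variable {Ω : Type*} [MeasurableSpace Ω] {μ : Measure Ω} {n : ℕ} {X Z : Ω → Fin n → ℝ} {snr : ℝ}

lemma measurable_obs (hX : Measurable X) (hZ : Measurable Z) : Measurable (obs X Z snr) := by
  unfold obs
  fun_prop

lemma memLp_two_of_integrable_sum_sq (hX : Measurable X)
    (hX2 : Integrable (fun ω => ∑ i, (X ω i) ^ 2) μ) (i : Fin n) :
    MemLp (fun ω => X ω i) 2 μ := by
  rw [memLp_two_iff_integrable_sq (by fun_prop)]
  refine hX2.mono' (by fun_prop) (.of_forall fun ω => ?_)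
  rw [Real.norm_of_nonneg (sq_nonneg _)]
  exact Finset.single_le_sum (f := fun i => X ω i ^ 2) (fun _ _ => sq_nonneg _) (Finset.mem_univ i)

lemma integral_mul_eval_eq_zero (hX : Measurable X) (hZ : Measurable Z)
    (hZlaw : Measure.map Z μ = Measure.pi fun _ : Fin n => gaussianReal 0 1)
    (hindep : IndepFun X Z μ) (i : Fin n) : ∫ ω, X ω i * Z ω i ∂μ = 0 := by
  have h : IndepFun (fun ω => X ω i) (fun ω => Z ω i) μ :=
    hindep.comp (measurable_pi_apply i) (measurable_pi_apply i)
  rw [h.integral_fun_mul_eq_mul_integral (by fun_prop) (by fun_prop),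
    integral_comp_eval_eq_gaussianReal hZ hZlaw i (f := fun x => x) measurable_id]
  simp

lemma integral_eval_sq (hZ : Measurable Z)
    (hZlaw : Measure.map Z μ = Measure.pi fun _ : Fin n => gaussianReal 0 1) (i : Fin n) :
    ∫ ω, Z ω i ^ 2 ∂μ = 1 := by
  rw [integral_comp_eval_eq_gaussianReal hZ hZlaw i (f := fun x => x ^ 2) (by fun_prop),
    integral_sq_gaussianReal_zero_one]

lemma covMat_obsSigma_symm (ω : Ω) (i j : Fin n) :
    covMat (obsSigma X Z snr) μ X ω i j = covMat (obsSigma X Z snr) μ X ω j i := by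
  simp only [covMat, ceMat, ceVec, Matrix.sub_apply, Matrix.of_apply, Matrix.vecMulVec_apply,
    mul_comm]

variable [IsProbabilityMeasure μ]

lemma memLp_two_eval (hZ : Measurable Z)
    (hZlaw : Measure.map Z μ = Measure.pi fun _ : Fin n => gaussianReal 0 1) (i : Fin n) :
    MemLp (fun ω => Z ω i) 2 μ :=
  (memLp_four_eval hZ hZlaw i).mono_exponent (by norm_num)

lemma memLp_two_obs (hX : Measurable X) (hZ : Measurable Z)
    (hZlaw : Measure.map Z μ = Measure.pi fun _ : Fin n => gaussianReal 0 1)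
    (hX2 : Integrable (fun ω => ∑ i, (X ω i) ^ 2) μ) (i : Fin n) :
    MemLp (fun ω => obs X Z snr ω i) 2 μ :=
  ((memLp_two_of_integrable_sum_sq hX hX2 i).const_mul _).add (memLp_two_eval hZ hZlaw i)

lemma integral_obs_mul_noise (hX : Measurable X) (hZ : Measurable Z)
    (hZlaw : Measure.map Z μ = Measure.pi fun _ : Fin n => gaussianReal 0 1)
    (hindep : IndepFun X Z μ) (hX2 : Integrable (fun ω => ∑ i, (X ω i) ^ 2) μ) (i : Fin n) :
    ∫ ω, obs X Z snr ω i * Z ω i ∂μ = 1 := by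
  have hXi := memLp_two_of_integrable_sum_sq hX hX2 i
  have hZi := memLp_two_eval hZ hZlaw i
  have hXZ : Integrable (fun ω => X ω i * Z ω i) μ := hXi.integrable_mul hZi
  have h : ∀ ω, obs X Z snr ω i * Z ω i = √snr * (X ω i * Z ω i) + Z ω i ^ 2 := fun ω => by
    simp only [obs]; ring
  simp_rw [h]
  rw [integral_add (hXZ.const_mul _) hZi.integrable_sq, integral_const_mul,
    integral_mul_eval_eq_zero hX hZ hZlaw hindep, integral_eval_sq hZ hZlaw]
  simp

lemma integral_obs_sq (hX : Measurable X) (hZ : Measurable Z)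
    (hZlaw : Measure.map Z μ = Measure.pi fun _ : Fin n => gaussianReal 0 1)
    (hindep : IndepFun X Z μ) (hX2 : Integrable (fun ω => ∑ i, (X ω i) ^ 2) μ)
    (hsnr : 0 ≤ snr) (i : Fin n) :
    ∫ ω, obs X Z snr ω i ^ 2 ∂μ = snr * ∫ ω, X ω i ^ 2 ∂μ + 1 := by
  have hXi := memLp_two_of_integrable_sum_sq hX hX2 i
  have hZi := memLp_two_eval hZ hZlaw i
  have hXZ : Integrable (fun ω => X ω i * Z ω i) μ := hXi.integrable_mul hZi
  have h : ∀ ω, obs X Z snr ω i ^ 2 =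
      snr * X ω i ^ 2 + 2 * √snr * (X ω i * Z ω i) + Z ω i ^ 2 := fun ω => by
    simp only [obs]
    linear_combination X ω i ^ 2 * Real.sq_sqrt hsnr
  simp_rw [h]
  rw [integral_add ((hXi.integrable_sq.const_mul _).fun_add (hXZ.const_mul _)) hZi.integrable_sq,
    integral_add (hXi.integrable_sq.const_mul _) (hXZ.const_mul _), integral_const_mul,
    integral_const_mul, integral_mul_eval_eq_zero hX hZ hZlaw hindep, integral_eval_sq hZ hZlaw]
  simp

/-- The conditional covariance of the input is `snr⁻¹` times that of the noise. -/
lemma covMat_obsSigma_ae_eq (hX : Measurable X) (hZ : Measurable Z)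
    (hZlaw : Measure.map Z μ = Measure.pi fun _ : Fin n => gaussianReal 0 1)
    (hX2 : Integrable (fun ω => ∑ i, (X ω i) ^ 2) μ) (hsnr : 0 < snr) :
    ∀ᵐ ω ∂μ, ∀ i j, covMat (obsSigma X Z snr) μ X ω i j =
      snr⁻¹ * ((∫ z, z i * z j ∂condDistrib Z (obs X Z snr) μ (obs X Z snr ω)) -
        (∫ z, z i ∂condDistrib Z (obs X Z snr) μ (obs X Z snr ω)) *
          ∫ z, z j ∂condDistrib Z (obs X Z snr) μ (obs X Z snr ω)) := by
  set Y := obs X Z snr with hYdef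
  have hY : Measurable Y := measurable_obs hX hZ
  set r := √snr with hr
  have hr0 : r ≠ 0 := (Real.sqrt_pos.2 hsnr).ne'
  have hr2 : r ^ 2 = snr := Real.sq_sqrt hsnr.le
  have hXi := memLp_two_of_integrable_sum_sq hX hX2
  have hXeq : ∀ ω i, X ω i = r⁻¹ * (Y ω i - Z ω i) := fun ω i => by
    simp only [hYdef, obs, ← hr]; field_simp; ring
  have hmean : ∀ i, μ[fun ω => X ω i | obsSigma X Z snr] =ᵐ[μ]
      fun ω => ∫ z, r⁻¹ * (Y ω i - z i) ∂condDistrib Z Y μ (Y ω) := fun i => by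
    have h := (hXi i).integrable one_le_two
    simp_rw [hXeq] at h ⊢
    exact condExp_comap_ae_eq_integral_condDistrib (f := fun y z => r⁻¹ * (y i - z i)) hY hZ
      (by unfold Function.uncurry; fun_prop) h
  have hsecond : ∀ i j, μ[fun ω => X ω i * X ω j | obsSigma X Z snr] =ᵐ[μ]
      fun ω => ∫ z, r⁻¹ * (Y ω i - z i) * (r⁻¹ * (Y ω j - z j)) ∂condDistrib Z Y μ (Y ω) :=
    fun i j => by
    have h : Integrable (fun ω => X ω i * X ω j) μ := (hXi i).integrable_mul (hXi j)
    simp_rw [hXeq] at h ⊢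
    exact condExp_comap_ae_eq_integral_condDistrib
      (f := fun y z => r⁻¹ * (y i - z i) * (r⁻¹ * (y j - z j))) hY hZ
      (by unfold Function.uncurry; fun_prop) h
  have hint1 : ∀ᵐ ω ∂μ, ∀ i, Integrable (fun z : Fin n → ℝ => z i) (condDistrib Z Y μ (Y ω)) :=
    ae_all_iff.2 fun i => ae_integrable_condDistrib (f := fun _ z => z i) hY hZ
      (by unfold Function.uncurry; fun_prop) ((memLp_two_eval hZ hZlaw i).integrable one_le_two)
  have hint2 : ∀ᵐ ω ∂μ, ∀ i j,
      Integrable (fun z : Fin n → ℝ => z i * z j) (condDistrib Z Y μ (Y ω)) :=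
    ae_all_iff.2 fun i => ae_all_iff.2 fun j =>
      ae_integrable_condDistrib (f := fun _ z => z i * z j) hY hZ
        (by unfold Function.uncurry; fun_prop)
        ((memLp_two_mul_eval hZ hZlaw i j).integrable one_le_two)
  filter_upwards [ae_all_iff.2 hmean, ae_all_iff.2 fun i => ae_all_iff.2 (hsecond i), hint1, hint2]
    with ω h1 h2 hi1 hi2 i j
  set κ := condDistrib Z Y μ (Y ω)
  have e1 : ∀ i, ∫ z, r⁻¹ * (Y ω i - z i) ∂κ = r⁻¹ * (Y ω i - ∫ z, z i ∂κ) := fun i => by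
    rw [integral_const_mul, integral_sub (integrable_const _) (hi1 i)]
    simp
  have e2 : ∫ z, r⁻¹ * (Y ω i - z i) * (r⁻¹ * (Y ω j - z j)) ∂κ =
      snr⁻¹ * (Y ω i * Y ω j - Y ω i * ∫ z, z j ∂κ - Y ω j * ∫ z, z i ∂κ + ∫ z, z i * z j ∂κ) := by
    have h : ∀ z : Fin n → ℝ, r⁻¹ * (Y ω i - z i) * (r⁻¹ * (Y ω j - z j)) =
        snr⁻¹ * (Y ω i * Y ω j - Y ω i * z j - Y ω j * z i + z i * z j) := fun z => by
      rw [← hr2]; field_simp; ring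
    simp_rw [h]
    have ia : Integrable (fun z : Fin n → ℝ => Y ω i * Y ω j - Y ω i * z j) κ :=
      (integrable_const _).sub ((hi1 j).const_mul _)
    have ib : Integrable (fun z : Fin n → ℝ => Y ω i * Y ω j - Y ω i * z j - Y ω j * z i) κ :=
      ia.sub ((hi1 i).const_mul _)
    rw [integral_const_mul, integral_add ib (hi2 i j),
      integral_sub ia ((hi1 i).const_mul _),
      integral_sub (integrable_const _) ((hi1 j).const_mul _)]
    simp [integral_const_mul]
  simp only [covMat, ceMat, ceVec, Matrix.sub_apply, Matrix.of_apply, Matrix.vecMulVec_apply]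
  rw [h2 i j, h1 i, h1 j, e1, e1, e2, ← hr2]
  field_simp
  ring

lemma integrable_sq_covMat_and_sum_le (hX : Measurable X) (hZ : Measurable Z)
    (hZlaw : Measure.map Z μ = Measure.pi fun _ : Fin n => gaussianReal 0 1)
    (hindep : IndepFun X Z μ) (hX2 : Integrable (fun ω => ∑ i, (X ω i) ^ 2) μ)
    (hsnr : 0 < snr) (c t : ℝ) (ht : 0 ≤ t) :
    (∀ i j, Integrable (fun ω => covMat (obsSigma X Z snr) μ X ω i j ^ 2) μ) ∧
      snr ^ 2 * ∫ ω, ∑ i, ∑ j, covMat (obsSigma X Z snr) μ X ω i j ^ 2 ∂μ ≤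
        n * (n + 2) - 2 * t * (2 * c * n - c ^ 2 * (snr * (∫ ω, ∑ i, X ω i ^ 2 ∂μ) + n)) + t ^ 2 := by
  set Y := obs X Z snr with hYdef
  have hY : Measurable Y := measurable_obs hX hZ
  set C := covMat (obsSigma X Z snr) μ X with hC
  set κ := condDistrib Z Y μ
  have h4 : ∀ i j, Integrable (fun ω => (Z ω i * Z ω j) ^ 2) μ := fun i j =>
    (memLp_two_mul_eval hZ hZlaw i j).integrable_sq
  have hm4 : ∀ i j : Fin n, Measurable
      (Function.uncurry fun (_ z : Fin n → ℝ) => (z i * z j) ^ 2) := fun i j => by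
    unfold Function.uncurry; fun_prop
  have hm2 : ∀ i : Fin n, Measurable (Function.uncurry fun (y z : Fin n → ℝ) => y i * z i) :=
    fun i => by unfold Function.uncurry; fun_prop
  have hYi : ∀ i, MemLp (fun ω => Y ω i) 2 μ := memLp_two_obs hX hZ hZlaw hX2
  have hYZ : ∀ i, Integrable (fun ω => Y ω i * Z ω i) μ := fun i =>
    (hYi i).integrable_mul (memLp_two_eval hZ hZlaw i)
  have hκ4 : ∀ᵐ ω ∂μ, ∀ i j, Integrable (fun z : Fin n → ℝ => (z i * z j) ^ 2) (κ (Y ω)) :=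
    ae_all_iff.2 fun i => ae_all_iff.2 fun j => ae_integrable_condDistrib hY hZ (hm4 i j) (h4 i j)
  have hpt : ∀ᵐ ω ∂μ, snr ^ 2 * ∑ i, ∑ j, C ω i j ^ 2 + (∑ i, (∫ z, z i ∂κ (Y ω)) ^ 2) ^ 2 ≤
      ∑ i, ∑ j, ∫ z, (z i * z j) ^ 2 ∂κ (Y ω) := by
    filter_upwards [covMat_obsSigma_ae_eq hX hZ hZlaw hX2 hsnr, hκ4] with ω hCω h4ω
    have h := sum_sq_covariance_add_le (κ (Y ω)) (fun i z => z i) measurable_pi_apply h4ω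
    have hs : snr ^ 2 * ∑ i, ∑ j, C ω i j ^ 2 = ∑ i, ∑ j, ((∫ z, z i * z j ∂κ (Y ω)) -
        (∫ z, z i ∂κ (Y ω)) * ∫ z, z j ∂κ (Y ω)) ^ 2 := by
      simp only [Finset.mul_sum]
      refine Finset.sum_congr rfl fun i _ => Finset.sum_congr rfl fun j _ => ?_
      rw [show C ω i j = _ from hCω i j]
      field_simp
      rfl
    rwa [hs]
  have hQint : Integrable (fun ω => ∑ i, ∑ j, ∫ z, (z i * z j) ^ 2 ∂κ (Y ω)) μ :=
    integrable_finsetSum _ fun i _ => integrable_finsetSum _ fun j _ =>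
      integrable_integral_condDistrib hY hZ (hm4 i j) (h4 i j)
  have hQ : ∫ ω, ∑ i, ∑ j, ∫ z, (z i * z j) ^ 2 ∂κ (Y ω) ∂μ = n * (n + 2) := by
    rw [← sum_integral_sq_mul_eval hZ hZlaw, integral_finsetSum _ fun i _ =>
      integrable_finsetSum _ fun j _ => integrable_integral_condDistrib hY hZ (hm4 i j) (h4 i j)]
    refine Finset.sum_congr rfl fun i _ => ?_
    rw [integral_finsetSum _ fun j _ => integrable_integral_condDistrib hY hZ (hm4 i j) (h4 i j)]
    exact Finset.sum_congr rfl fun j _ => integral_integral_condDistrib hY hZ (hm4 i j) (h4 i j)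
  have hCmeas : ∀ i j, AEStronglyMeasurable (fun ω => C ω i j ^ 2) μ := fun i j => by
    have hle : obsSigma X Z snr ≤ ‹MeasurableSpace Ω› := hY.comap_le
    have hce : ∀ f : Ω → ℝ, AEStronglyMeasurable (μ[f | obsSigma X Z snr]) μ := fun f =>
      (stronglyMeasurable_condExp.mono hle).aestronglyMeasurable
    exact ((hce _).sub ((hce _).mul (hce _))).pow 2
  have hCint : ∀ i j, Integrable (fun ω => C ω i j ^ 2) μ := fun i j => by
    refine (hQint.const_mul (snr ^ 2)⁻¹).mono' (hCmeas i j) ?_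
    filter_upwards [hpt] with ω hω
    have h1 : C ω i j ^ 2 ≤ ∑ i, ∑ j, C ω i j ^ 2 :=
      (Finset.single_le_sum (f := fun j => C ω i j ^ 2) (fun _ _ => sq_nonneg _)
        (Finset.mem_univ j)).trans
      (Finset.single_le_sum (f := fun i => ∑ j, C ω i j ^ 2)
        (fun _ _ => Finset.sum_nonneg fun _ _ => sq_nonneg _) (Finset.mem_univ i))
    rw [Real.norm_of_nonneg (sq_nonneg _), inv_mul_eq_div, le_div_iff₀ (by positivity)]
    nlinarith [sq_nonneg (∑ i, (∫ z, z i ∂κ (Y ω)) ^ 2), sq_nonneg snr]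
  refine ⟨hCint, ?_⟩
  have hYm : ∀ i, Integrable (fun ω => ∫ z, Y ω i * z i ∂κ (Y ω)) μ := fun i =>
    integrable_integral_condDistrib hY hZ (hm2 i) (hYZ i)
  have hLint : Integrable (fun ω => ∑ i, ∫ z, Y ω i * z i ∂κ (Y ω)) μ :=
    integrable_finsetSum _ fun i _ => hYm i
  have hL : ∫ ω, ∑ i, ∫ z, Y ω i * z i ∂κ (Y ω) ∂μ = n := by
    rw [integral_finsetSum _ fun i _ => hYm i]
    have : ∀ i, ∫ ω, ∫ z, Y ω i * z i ∂κ (Y ω) ∂μ = 1 := fun i =>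
      (integral_integral_condDistrib hY hZ (hm2 i) (hYZ i)).trans
        (integral_obs_mul_noise hX hZ hZlaw hindep hX2 i)
    simp [this]
  have hNint : Integrable (fun ω => ∑ i, Y ω i ^ 2) μ :=
    integrable_finsetSum _ fun i _ => (hYi i).integrable_sq
  have hN : ∫ ω, ∑ i, Y ω i ^ 2 ∂μ = snr * (∫ ω, ∑ i, X ω i ^ 2 ∂μ) + n := by
    rw [integral_finsetSum _ fun i _ => (hYi i).integrable_sq, integral_finsetSum _ fun i _ =>
      (memLp_two_of_integrable_sum_sq hX hX2 i).integrable_sq]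
    simp_rw [hYdef, integral_obs_sq hX hZ hZlaw hindep hX2 hsnr.le]
    simp [Finset.sum_add_distrib, Finset.mul_sum]
  have hLNint : Integrable (fun ω =>
      2 * c * (∑ i, ∫ z, Y ω i * z i ∂κ (Y ω)) - c ^ 2 * ∑ i, Y ω i ^ 2) μ :=
    (hLint.const_mul _).sub (hNint.const_mul _)
  have hQLNint : Integrable (fun ω => (∑ i, ∑ j, ∫ z, (z i * z j) ^ 2 ∂κ (Y ω)) - 2 * t *
      (2 * c * (∑ i, ∫ z, Y ω i * z i ∂κ (Y ω)) - c ^ 2 * ∑ i, Y ω i ^ 2)) μ :=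
    hQint.sub (hLNint.const_mul _)
  calc snr ^ 2 * ∫ ω, ∑ i, ∑ j, C ω i j ^ 2 ∂μ
      = ∫ ω, snr ^ 2 * ∑ i, ∑ j, C ω i j ^ 2 ∂μ := (integral_const_mul _ _).symm
    _ ≤ ∫ ω, (((∑ i, ∑ j, ∫ z, (z i * z j) ^ 2 ∂κ (Y ω)) - 2 * t *
          (2 * c * (∑ i, ∫ z, Y ω i * z i ∂κ (Y ω)) - c ^ 2 * ∑ i, Y ω i ^ 2)) + t ^ 2) ∂μ := by
        refine integral_mono_ae ((integrable_finsetSum _ fun i _ =>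
          integrable_finsetSum _ fun j _ => hCint i j).const_mul _)
          (hQLNint.add (integrable_const _)) ?_
        filter_upwards [hpt] with ω hω
        have hsq : 2 * c * (∑ i, ∫ z, Y ω i * z i ∂κ (Y ω)) - c ^ 2 * ∑ i, Y ω i ^ 2 ≤
            ∑ i, (∫ z, z i ∂κ (Y ω)) ^ 2 := by
          simp only [Finset.mul_sum, ← Finset.sum_sub_distrib]
          refine Finset.sum_le_sum fun i _ => ?_
          rw [integral_const_mul]
          linarith [sq_nonneg ((∫ z, z i ∂κ (Y ω)) - c * Y ω i)]
        have := mul_le_mul_of_nonneg_left hsq (by positivity : 0 ≤ 2 * t)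
        linarith [sq_nonneg ((∑ i, (∫ z, z i ∂κ (Y ω)) ^ 2) - t)]
    _ = _ := by
        rw [integral_add hQLNint (integrable_const _),
          integral_sub hQint (hLNint.const_mul _), integral_const_mul (2 * t),
          integral_sub (hLint.const_mul _) (hNint.const_mul _), integral_const_mul,
          integral_const_mul, hQ, hL, hN]
        simp

end Channel

/-- **Power-constrained refinement of Proposition 9 (equation (45)).**
If `(1/n)·E[‖X‖²] ≤ 1` then `(1/n)·Tr(E[(Cov(X|Y))²]) ≤ (n + 2 − 1/(1+snr)²)/snr²`. -/
theorem derivative_mmse_power_bound {Ω : Type*} [MeasurableSpace Ω] (μ : Measure Ω) [IsProbabilityMeasure μ]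
    (n : ℕ) (hn : 1 ≤ n) (X Z : Ω → Fin n → ℝ)
    (hX : Measurable X) (hZ : Measurable Z)
    (hZlaw : Measure.map Z μ = Measure.pi fun _ : Fin n => gaussianReal 0 1)
    (hindep : IndepFun X Z μ)
    (hX2 : Integrable (fun ω => ∑ i, (X ω i) ^ 2) μ)
    (hpow : (1 / (n : ℝ)) * ∫ ω, ∑ i, (X ω i) ^ 2 ∂μ ≤ 1)
    (snr : ℝ) (hsnr : 0 < snr) :
    (1 / (n : ℝ)) * trExp μ (fun ω => (covMat (obsSigma X Z snr) μ X ω) ^ 2) ≤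
      ((n : ℝ) + 2 - 1 / (1 + snr) ^ 2) / snr ^ 2 := by
  have hn0 : (0 : ℝ) < n := by exact_mod_cast hn
  have hs1 : (0 : ℝ) < 1 + snr := by linarith
  obtain ⟨hint, hle⟩ := integrable_sq_covMat_and_sum_le hX hZ hZlaw hindep hX2 hsnr
    (1 / (1 + snr)) (n / (1 + snr)) (by positivity)
  set C := covMat (obsSigma X Z snr) μ X with hC
  have htr : trExp μ (fun ω => C ω ^ 2) = ∫ ω, ∑ i, ∑ j, C ω i j ^ 2 ∂μ := by
    rw [integral_finsetSum _ fun i _ => integrable_finsetSum _ fun j _ => hint i j]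
    simp only [trExp, expMat, Matrix.trace, Matrix.diag, Matrix.of_apply]
    refine Finset.sum_congr rfl fun i _ => integral_congr_ae (.of_forall fun ω => ?_)
    simp only [sq, Matrix.mul_apply]
    exact Finset.sum_congr rfl fun j _ => by rw [hC, covMat_obsSigma_symm ω j i]
  have hP : ∫ ω, ∑ i, X ω i ^ 2 ∂μ ≤ n := by
    rwa [one_div, inv_mul_le_iff₀ hn0, mul_one] at hpow
  rw [htr, le_div_iff₀ (by positivity)]
  set I := ∫ ω, ∑ i, ∑ j, C ω i j ^ 2 ∂μ
  set P := ∫ ω, ∑ i, X ω i ^ 2 ∂μ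
  have hI : snr ^ 2 * I ≤ n * (n + 2) - n ^ 2 / (1 + snr) ^ 2 := by
    refine hle.trans ?_
    have hPn : snr * P + n ≤ n * (1 + snr) := by nlinarith
    have h1 := mul_le_mul_of_nonneg_left hPn
      (by positivity : 0 ≤ 2 * (n / (1 + snr)) * (1 / (1 + snr)) ^ 2)
    have h2 : 2 * (n / (1 + snr)) * (1 / (1 + snr)) ^ 2 * (n * (1 + snr)) =
        2 * n ^ 2 / (1 + snr) ^ 2 := by field_simp
    have h3 : 2 * (n / (1 + snr)) * (2 * (1 / (1 + snr)) * n) = 4 * n ^ 2 / (1 + snr) ^ 2 := by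
      field_simp; ring
    rw [div_pow (n : ℝ)]
    rw [h2] at h1
    rw [mul_sub, h3]
    linarith [show 4 * (n : ℝ) ^ 2 / (1 + snr) ^ 2 = 4 * (n ^ 2 / (1 + snr) ^ 2) by ring,
      show 2 * (n : ℝ) ^ 2 / (1 + snr) ^ 2 = 2 * (n ^ 2 / (1 + snr) ^ 2) by ring]
  have hnn : (n : ℝ) / (1 + snr) ^ 2 ≤ n ^ 2 / (1 + snr) ^ 2 := by
    have : (1 : ℝ) ≤ n := by exact_mod_cast hn
    gcongr
    nlinarith
  rw [one_div, mul_assoc, inv_mul_le_iff₀ hn0]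
  calc I * snr ^ 2 = snr ^ 2 * I := mul_comm _ _
    _ ≤ n * (n + 2) - n / (1 + snr) ^ 2 := by linarith
    _ = n * (n + 2 - 1 / (1 + snr) ^ 2) := by ring

end
end

section
/- (Proposition 11, fourth-moment bounds on the derivative of the MMSE.) For every n ≥ 1, every snr > 0, and every random vector X in ℝⁿ with Tr(E[(X Xᵀ)²]) < ∞, Tr(E[(Cov(X|Y_snr))²]) ≤ min( Tr(E[((X − √snr·Z)(X − √snr·Z)ᵀ)²])/(1+snr)⁴ , Tr(E[(E[X Xᵀ|Y_snr])²]) ); moreover Tr(E[(E[X Xᵀ|Y_snr])²]) ≤ Tr(E[(X Xᵀ)²]). -/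
open MeasureTheory ProbabilityTheory Real Matrix

noncomputable section

section ConditionalMoments

variable {Ω : Type*} {n : ℕ} {m m₀ : MeasurableSpace Ω} {μ : Measure[m₀] Ω}

instance holderTriple_four_four_two : ENNReal.HolderTriple 4 4 2 where
  inv_add_inv_eq_inv := by
    rw [← two_mul, ← ENNReal.toReal_eq_toReal_iff' (by finiteness) (by finiteness)]
    norm_num

lemma memLp_four_of_integrable_pow_four {f : Ω → ℝ} (hf : AEStronglyMeasurable f μ)
    (hint : Integrable (fun ω => f ω ^ 4) μ) : MemLp f 4 μ := by
  rw [← integrable_norm_rpow_iff hf (by norm_num) (by norm_num)]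
  refine hint.congr (ae_of_all _ fun ω => ?_)
  have : (4 : ENNReal).toReal = ((4 : ℕ) : ℝ) := by norm_num
  simp only [this]
  rw [Real.rpow_natCast, Real.norm_eq_abs, Even.pow_abs (by decide)]

lemma integral_mul_condExp (hm : m ≤ m₀) [SigmaFinite (μ.trim hm)] {f g : Ω → ℝ}
    (hf : StronglyMeasurable[m] f) (hfg : Integrable (f * g) μ) (hg : Integrable g μ) :
    ∫ ω, f ω * (μ[g | m]) ω ∂μ = ∫ ω, f ω * g ω ∂μ := by
  have h := integral_congr_ae (condExp_mul_of_stronglyMeasurable_left hf hfg hg)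
  rw [integral_condExp hm] at h
  exact h.symm

lemma integral_sub_two_mul_add {f g h : Ω → ℝ} (hf : Integrable f μ) (hg : Integrable g μ)
    (hh : Integrable h μ) :
    ∫ ω, (f ω - 2 * g ω + h ω) ∂μ = ∫ ω, f ω ∂μ - 2 * ∫ ω, g ω ∂μ + ∫ ω, h ω ∂μ := by
  rw [integral_add (f := fun ω => f ω - 2 * g ω) (hf.sub (hg.const_mul 2)) hh,
    integral_sub hf (hg.const_mul 2), integral_const_mul]

lemma integral_sq_condExp_le (hm : m ≤ m₀) [IsFiniteMeasure μ] {f : Ω → ℝ} (hf : MemLp f 2 μ) :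
    ∫ ω, (μ[f | m]) ω ^ 2 ∂μ ≤ ∫ ω, f ω ^ 2 ∂μ := by
  have hvar : (0 : Ω → ℝ) ≤ᵐ[μ] Var[f; μ | m] :=
    condExp_nonneg (ae_of_all _ fun ω => sq_nonneg _)
  have hle : ∀ᵐ ω ∂μ, (μ[f | m]) ω ^ 2 ≤ (μ[f ^ 2 | m]) ω := by
    filter_upwards [hvar, condVar_ae_eq_condExp_sq_sub_sq_condExp hm hf] with ω h0 h1
    simp only [Pi.zero_apply, Pi.sub_apply, Pi.pow_apply] at h0 h1
    linarith
  calc ∫ ω, (μ[f | m]) ω ^ 2 ∂μ ≤ ∫ ω, (μ[f ^ 2 | m]) ω ∂μ :=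
        integral_mono_ae (hf.condExp one_le_two).integrable_sq integrable_condExp hle
    _ = ∫ ω, f ω ^ 2 ∂μ := by rw [integral_condExp hm]; rfl

lemma trace_sq_eq_sum (A : Matrix (Fin n) (Fin n) ℝ) :
    (A ^ 2).trace = ∑ i, ∑ j, A i j * A j i := by
  simp [Matrix.trace, sq, Matrix.mul_apply]

lemma trExp_sq_eq_sum {M : Ω → Matrix (Fin n) (Fin n) ℝ}
    (hM : ∀ i j, MemLp (fun ω => M ω i j) 2 μ) :
    trExp μ (fun ω => M ω ^ 2) = ∑ i, ∑ j, ∫ ω, M ω i j * M ω j i ∂μ := by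
  simp only [trExp, expMat, Matrix.trace, Matrix.diag, Matrix.of_apply, sq, Matrix.mul_apply]
  exact Finset.sum_congr rfl fun i _ =>
    integral_finsetSum _ fun j _ => (hM i j).integrable_mul (hM j i)

lemma trExp_sq_eq_integral {M : Ω → Matrix (Fin n) (Fin n) ℝ}
    (hM : ∀ i j, MemLp (fun ω => M ω i j) 2 μ) :
    trExp μ (fun ω => M ω ^ 2) = ∫ ω, ∑ i, ∑ j, M ω i j * M ω j i ∂μ := by
  have hint (i j : Fin n) : Integrable (fun ω => M ω i j * M ω j i) μ :=
    (hM i j).integrable_mul (hM j i)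
  rw [trExp_sq_eq_sum hM, integral_finsetSum _ fun i _ => integrable_finsetSum _ fun j _ => hint i j]
  exact Finset.sum_congr rfl fun i _ => (integral_finsetSum _ fun j _ => hint i j).symm

lemma ceMat_vecMulVec_comm (V : Ω → Fin n → ℝ) (ω : Ω) (i j : Fin n) :
    ceMat m μ (fun ω' => vecMulVec (V ω') (V ω')) ω i j =
      ceMat m μ (fun ω' => vecMulVec (V ω') (V ω')) ω j i := by
  simp only [ceMat, Matrix.of_apply, vecMulVec_apply, mul_comm]

lemma memLp_vecMulVec {V : Ω → Fin n → ℝ} (hV : ∀ i, MemLp (fun ω => V ω i) 4 μ) (i j : Fin n) :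
    MemLp (fun ω => vecMulVec (V ω) (V ω) i j) 2 μ :=
  (hV j).mul' (hV i)

lemma memLp_ceMat {M : Ω → Matrix (Fin n) (Fin n) ℝ} (hM : ∀ i j, MemLp (fun ω => M ω i j) 2 μ)
    (i j : Fin n) : MemLp (fun ω => ceMat m μ M ω i j) 2 μ :=
  (hM i j).condExp one_le_two

lemma memLp_ceVec {V : Ω → Fin n → ℝ} (hV : ∀ i, MemLp (fun ω => V ω i) 4 μ) (i : Fin n) :
    MemLp (fun ω => ceVec m μ V ω i) 4 μ :=
  (hV i).condExp (by norm_num)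

lemma memLp_covMat {V : Ω → Fin n → ℝ} (hV : ∀ i, MemLp (fun ω => V ω i) 4 μ) (i j : Fin n) :
    MemLp (fun ω => covMat m μ V ω i j) 2 μ :=
  (memLp_ceMat (memLp_vecMulVec hV) i j).sub (memLp_vecMulVec (memLp_ceVec hV) i j)

lemma stronglyMeasurable_ceVec (V : Ω → Fin n → ℝ) (i : Fin n) :
    StronglyMeasurable[m] (fun ω => ceVec m μ V ω i) :=
  stronglyMeasurable_condExp

/-- The conditional second-moment matrix contracts the trace of the expected square. -/
lemma trExp_sq_ceMat_le (hm : m ≤ m₀) [IsFiniteMeasure μ] {V : Ω → Fin n → ℝ}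
    (hV : ∀ i, MemLp (fun ω => V ω i) 4 μ) :
    trExp μ (fun ω => ceMat m μ (fun ω' => vecMulVec (V ω') (V ω')) ω ^ 2) ≤
      trExp μ (fun ω => vecMulVec (V ω) (V ω) ^ 2) := by
  have hVV := memLp_vecMulVec hV
  rw [trExp_sq_eq_sum (memLp_ceMat hVV), trExp_sq_eq_sum hVV]
  refine Finset.sum_le_sum fun i _ => Finset.sum_le_sum fun j _ => ?_
  have h := integral_sq_condExp_le hm (hVV i j)
  refine (le_of_eq ?_).trans (h.trans (le_of_eq ?_))
  · refine integral_congr_ae (ae_of_all _ fun ω => ?_)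
    dsimp only
    rw [ceMat_vecMulVec_comm V ω j i, ← sq]
    rfl
  · refine integral_congr_ae (ae_of_all _ fun ω => ?_)
    simp only [vecMulVec_apply]
    ring

/-- With `a = E[V|m]`, the expectation of `|a|⁴` is at most that of `aᵀ E[VVᵀ|m] a`. -/
lemma integral_sq_sum_sq_ceVec_le (hm : m ≤ m₀) [IsFiniteMeasure μ] {V : Ω → Fin n → ℝ}
    (hV : ∀ i, MemLp (fun ω => V ω i) 4 μ) :
    ∫ ω, (∑ i, ceVec m μ V ω i * ceVec m μ V ω i) ^ 2 ∂μ ≤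
      ∫ ω, ∑ i, ∑ j, ceVec m μ V ω i * ceVec m μ V ω j *
        ceMat m μ (fun ω' => vecMulVec (V ω') (V ω')) ω i j ∂μ := by
  set a : Ω → Fin n → ℝ := ceVec m μ V
  set A := ceMat m μ (fun ω' => vecMulVec (V ω') (V ω'))
  have ha : ∀ i, MemLp (fun ω => a ω i) 4 μ := memLp_ceVec hV
  have ham : ∀ i, StronglyMeasurable[m] (fun ω => a ω i) := stronglyMeasurable_ceVec V
  have haa (i j : Fin n) : MemLp (fun ω => a ω i * a ω j) 2 μ := (ha j).mul' (ha i)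
  have haV (i j : Fin n) : MemLp (fun ω => a ω i * V ω j) 2 μ := (hV j).mul' (ha i)
  have hVV (i j : Fin n) : MemLp (fun ω => V ω i * V ω j) 2 μ := (hV j).mul' (hV i)
  have hA : ∀ i j, MemLp (fun ω => A ω i j) 2 μ := memLp_ceMat (memLp_vecMulVec hV)
  have hS : MemLp (fun ω => ∑ i, a ω i * V ω i) 2 μ := memLp_finsetSum _ fun i _ => haV i i
  have hQ : MemLp (fun ω => ∑ i, a ω i * a ω i) 2 μ := memLp_finsetSum _ fun i _ => haa i i
  have hQm : StronglyMeasurable[m] (fun ω => ∑ i, a ω i * a ω i) :=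
    Finset.stronglyMeasurable_fun_sum _ fun i _ => (ham i).mul (ham i)
  have hSS : ∫ ω, (∑ i, a ω i * V ω i) ^ 2 ∂μ = ∫ ω, ∑ i, ∑ j, a ω i * a ω j * A ω i j ∂μ := by
    have h1 (i j : Fin n) : Integrable (fun ω => a ω i * a ω j * A ω i j) μ :=
      (haa i j).integrable_mul (hA i j)
    have h2 (i j : Fin n) : Integrable (fun ω => a ω i * a ω j * (V ω i * V ω j)) μ :=
      (haa i j).integrable_mul (hVV i j)
    have h3 : (fun ω => (∑ i, a ω i * V ω i) ^ 2) =
        fun ω => ∑ i, ∑ j, a ω i * a ω j * (V ω i * V ω j) := by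
      funext ω
      rw [sq, Finset.sum_mul_sum]
      exact Finset.sum_congr rfl fun i _ => Finset.sum_congr rfl fun j _ => by ring
    rw [h3, integral_finsetSum _ fun i _ => integrable_finsetSum _ fun j _ => h1 i j,
      integral_finsetSum _ fun i _ => integrable_finsetSum _ fun j _ => h2 i j]
    refine Finset.sum_congr rfl fun i _ => ?_
    rw [integral_finsetSum _ fun j _ => h1 i j, integral_finsetSum _ fun j _ => h2 i j]
    refine Finset.sum_congr rfl fun j _ => ?_
    exact (integral_mul_condExp hm ((ham i).mul (ham j)) (h2 i j)
      ((hVV i j).integrable one_le_two)).symm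
  have hQS : ∫ ω, (∑ i, a ω i * a ω i) * (∑ i, a ω i * V ω i) ∂μ =
      ∫ ω, (∑ i, a ω i * a ω i) ^ 2 ∂μ := by
    have h1 (i : Fin n) : Integrable (fun ω => (∑ k, a ω k * a ω k) * a ω i * V ω i) μ :=
      (hQ.integrable_mul (haV i i)).congr (ae_of_all _ fun ω => (mul_assoc _ _ _).symm)
    have h2 (i : Fin n) : Integrable (fun ω => (∑ k, a ω k * a ω k) * a ω i * a ω i) μ :=
      (hQ.integrable_mul (haa i i)).congr (ae_of_all _ fun ω => (mul_assoc _ _ _).symm)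
    simp only [sq]
    simp_rw [Finset.mul_sum, ← mul_assoc]
    rw [integral_finsetSum _ fun i _ => h1 i, integral_finsetSum _ fun i _ => h2 i]
    exact Finset.sum_congr rfl fun i _ => (integral_mul_condExp hm (hQm.mul (ham i)) (h1 i)
      ((hV i).integrable (by norm_num))).symm
  have hnonneg : 0 ≤ ∫ ω, ((∑ i, a ω i * V ω i) - ∑ i, a ω i * a ω i) ^ 2 ∂μ :=
    integral_nonneg fun ω => sq_nonneg _
  have hexp : ∫ ω, ((∑ i, a ω i * V ω i) - ∑ i, a ω i * a ω i) ^ 2 ∂μ =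
      ∫ ω, (∑ i, a ω i * V ω i) ^ 2 ∂μ
        - 2 * ∫ ω, (∑ i, a ω i * a ω i) * (∑ i, a ω i * V ω i) ∂μ
        + ∫ ω, (∑ i, a ω i * a ω i) ^ 2 ∂μ := by
    have hQSi : Integrable (fun ω => (∑ i, a ω i * a ω i) * (∑ i, a ω i * V ω i)) μ :=
      hQ.integrable_mul hS
    rw [← integral_sub_two_mul_add hS.integrable_sq hQSi hQ.integrable_sq]
    exact integral_congr_ae (ae_of_all _ fun ω => by ring)
  linarith

/-- Passing from the conditional covariance to the conditional second-moment matrix increases the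
trace of the expected square. -/
lemma trExp_sq_covMat_le (hm : m ≤ m₀) [IsFiniteMeasure μ] {V : Ω → Fin n → ℝ}
    (hV : ∀ i, MemLp (fun ω => V ω i) 4 μ) :
    trExp μ (fun ω => covMat m μ V ω ^ 2) ≤
      trExp μ (fun ω => ceMat m μ (fun ω' => vecMulVec (V ω') (V ω')) ω ^ 2) := by
  have hA := memLp_ceMat (m := m) (memLp_vecMulVec hV)
  have ha := memLp_ceVec (m := m) hV
  have haa (i j : Fin n) : MemLp (fun ω => ceVec m μ V ω i * ceVec m μ V ω j) 2 μ :=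
    (ha j).mul' (ha i)
  rw [trExp_sq_eq_integral (memLp_covMat hV), trExp_sq_eq_integral hA]
  have hle := integral_sq_sum_sq_ceVec_le hm hV
  have hsq : 0 ≤ ∫ ω, (∑ i, ceVec m μ V ω i * ceVec m μ V ω i) ^ 2 ∂μ :=
    integral_nonneg fun ω => sq_nonneg _
  have hAA : Integrable (fun ω => ∑ i, ∑ j,
      ceMat m μ (fun ω' => vecMulVec (V ω') (V ω')) ω i j *
        ceMat m μ (fun ω' => vecMulVec (V ω') (V ω')) ω j i) μ :=
    integrable_finsetSum _ fun i _ => integrable_finsetSum _ fun j _ =>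
      (hA i j).integrable_mul (hA j i)
  have haaA : Integrable (fun ω => ∑ i, ∑ j, ceVec m μ V ω i * ceVec m μ V ω j *
      ceMat m μ (fun ω' => vecMulVec (V ω') (V ω')) ω i j) μ :=
    integrable_finsetSum _ fun i _ => integrable_finsetSum _ fun j _ =>
      (haa i j).integrable_mul (hA i j)
  have hQ : Integrable (fun ω => (∑ i, ceVec m μ V ω i * ceVec m μ V ω i) ^ 2) μ :=
    (memLp_finsetSum _ fun i _ => haa i i).integrable_sq
  have hexp : ∫ ω, ∑ i, ∑ j, covMat m μ V ω i j * covMat m μ V ω j i ∂μ =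
      ∫ ω, ∑ i, ∑ j, ceMat m μ (fun ω' => vecMulVec (V ω') (V ω')) ω i j *
          ceMat m μ (fun ω' => vecMulVec (V ω') (V ω')) ω j i ∂μ
        - 2 * ∫ ω, ∑ i, ∑ j, ceVec m μ V ω i * ceVec m μ V ω j *
          ceMat m μ (fun ω' => vecMulVec (V ω') (V ω')) ω i j ∂μ
        + ∫ ω, (∑ i, ceVec m μ V ω i * ceVec m μ V ω i) ^ 2 ∂μ := by
    rw [← integral_sub_two_mul_add hAA haaA hQ]
    refine integral_congr_ae (ae_of_all _ fun ω => ?_)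
    dsimp only
    rw [sq, Finset.sum_mul_sum]
    simp only [Finset.mul_sum, ← Finset.sum_sub_distrib, ← Finset.sum_add_distrib]
    refine Finset.sum_congr rfl fun i _ => Finset.sum_congr rfl fun j _ => ?_
    simp only [covMat, Matrix.sub_apply, vecMulVec_apply]
    rw [ceMat_vecMulVec_comm V ω j i]
    ring
  linarith

/-- Conditional covariance is invariant under `m`-measurable shifts and quadratic in scalings. -/
lemma covMat_const_mul_add (hm : m ≤ m₀) [IsFiniteMeasure μ] {V W : Ω → Fin n → ℝ} (c : ℝ)
    (hV : ∀ i, MemLp (fun ω => V ω i) 2 μ) (hW : ∀ i, MemLp (fun ω => W ω i) 2 μ)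
    (hWm : ∀ i, StronglyMeasurable[m] (fun ω => W ω i)) :
    ∀ᵐ ω ∂μ, covMat m μ (fun ω i => c * (V ω i + W ω i)) ω = c ^ 2 • covMat m μ V ω := by
  have hVi (i : Fin n) : Integrable (fun ω => V ω i) μ := (hV i).integrable one_le_two
  have hWi (i : Fin n) : Integrable (fun ω => W ω i) μ := (hW i).integrable one_le_two
  have hVV (i j : Fin n) : Integrable (fun ω => V ω i * V ω j) μ := (hV i).integrable_mul (hV j)
  have hWV (i j : Fin n) : Integrable (fun ω => W ω i * V ω j) μ := (hW i).integrable_mul (hV j)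
  have hWW (i j : Fin n) : Integrable (fun ω => W ω i * W ω j) μ := (hW i).integrable_mul (hW j)
  have hvec (i : Fin n) : ∀ᵐ ω ∂μ, (μ[fun ω => c * (V ω i + W ω i) | m]) ω =
      c * ((μ[fun ω => V ω i | m]) ω + W ω i) := by
    filter_upwards [condExp_smul (m := m) (μ := μ) c (fun ω => V ω i + W ω i),
      condExp_add (m := m) (hVi i) (hWi i)] with ω h1 h2
    rw [condExp_of_stronglyMeasurable hm (hWm i) (hWi i)] at h2
    exact h1.trans (congrArg (c * ·) h2)
  have hmat (i j : Fin n) : ∀ᵐ ω ∂μ,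
      (μ[fun ω => (c * (V ω i + W ω i)) * (c * (V ω j + W ω j)) | m]) ω =
      c ^ 2 * ((μ[fun ω => V ω i * V ω j | m]) ω + W ω j * (μ[fun ω => V ω i | m]) ω
        + (W ω i * (μ[fun ω => V ω j | m]) ω + W ω i * W ω j)) := by
    have hrw : (fun ω => (c * (V ω i + W ω i)) * (c * (V ω j + W ω j))) =
        c ^ 2 • (((fun ω => V ω i * V ω j) + fun ω => W ω j * V ω i)
          + ((fun ω => W ω i * V ω j) + fun ω => W ω i * W ω j)) := by
      funext ω
      simp only [Pi.smul_apply, Pi.add_apply, smul_eq_mul]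
      ring
    rw [hrw]
    filter_upwards [condExp_smul (m := m) (μ := μ) (c ^ 2)
        (((fun ω => V ω i * V ω j) + fun ω => W ω j * V ω i)
          + ((fun ω => W ω i * V ω j) + fun ω => W ω i * W ω j)),
      condExp_add (m := m) ((hVV i j).add (hWV j i)) ((hWV i j).add (hWW i j)),
      condExp_add (m := m) (hVV i j) (hWV j i), condExp_add (m := m) (hWV i j) (hWW i j),
      condExp_mul_of_stronglyMeasurable_left (hWm j) (hWV j i) (hVi i),
      condExp_mul_of_stronglyMeasurable_left (hWm i) (hWV i j) (hVi j)]
      with ω h1 h2 h3 h4 h5 h6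
    have h7 : μ[fun ω => W ω i * W ω j | m] = fun ω => W ω i * W ω j :=
      condExp_of_stronglyMeasurable hm ((hWm i).mul (hWm j)) (hWW i j)
    rw [h7] at h4
    simp only [Pi.smul_apply, Pi.add_apply, Pi.mul_apply, smul_eq_mul] at h1 h2 h3 h4 h5 h6
    rw [h1, h2, h3, h4]
    exact congrArg₂ (fun x y => c ^ 2 * (_ + x + (y + _))) h5 h6
  filter_upwards [ae_all_iff.2 hvec, ae_all_iff.2 fun i => ae_all_iff.2 (hmat i)] with ω h1 h2
  ext i j
  simp only [covMat, ceMat, ceVec, Matrix.sub_apply, Matrix.smul_apply, vecMulVec_apply,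
    Matrix.of_apply, smul_eq_mul]
  rw [h1, h1, h2]
  ring

lemma trExp_congr_ae {M N : Ω → Matrix (Fin n) (Fin n) ℝ} (h : ∀ᵐ ω ∂μ, M ω = N ω) :
    trExp μ M = trExp μ N := by
  unfold trExp Matrix.trace
  exact Finset.sum_congr rfl fun i _ => integral_congr_ae (h.mono fun ω hω => congrFun₂ hω i i)

lemma trExp_smul (c : ℝ) (M : Ω → Matrix (Fin n) (Fin n) ℝ) :
    trExp μ (fun ω => c • M ω) = c * trExp μ M := by
  simp [trExp, expMat, Matrix.trace, integral_const_mul, Finset.mul_sum]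

lemma memLp_four_of_integrable_trace {X : Ω → Fin n → ℝ} (hX : Measurable X)
    (hint : Integrable (fun ω => trace (vecMulVec (X ω) (X ω) ^ 2)) μ) (i : Fin n) :
    MemLp (fun ω => X ω i) 4 μ := by
  have hXi : Measurable (fun ω => X ω i) := (measurable_pi_apply i).comp hX
  refine memLp_four_of_integrable_pow_four hXi.aestronglyMeasurable
    (hint.mono (hXi.pow_const 4).aestronglyMeasurable (ae_of_all _ fun ω => ?_))
  have hterm (k l : Fin n) :
      vecMulVec (X ω) (X ω) k l * vecMulVec (X ω) (X ω) l k = (X ω k * X ω l) ^ 2 := by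
    simp only [vecMulVec_apply]
    ring
  have hle : X ω i ^ 4 ≤ trace (vecMulVec (X ω) (X ω) ^ 2) := by
    rw [trace_sq_eq_sum]
    simp only [hterm]
    calc X ω i ^ 4 = (X ω i * X ω i) ^ 2 := by ring
      _ ≤ ∑ l, (X ω i * X ω l) ^ 2 :=
        Finset.single_le_sum (f := fun l => (X ω i * X ω l) ^ 2)
          (fun l _ => sq_nonneg _) (Finset.mem_univ i)
      _ ≤ ∑ k, ∑ l, (X ω k * X ω l) ^ 2 :=
        Finset.single_le_sum (f := fun k => ∑ l, (X ω k * X ω l) ^ 2)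
          (fun k _ => Finset.sum_nonneg fun l _ => sq_nonneg _) (Finset.mem_univ i)
  rw [Real.norm_of_nonneg (by positivity)]
  exact hle.trans (le_abs_self _)

lemma memLp_four_of_map_eq_pi_gaussianReal {Z : Ω → Fin n → ℝ} (hZ : Measurable Z)
    (hlaw : Measure.map Z μ = Measure.pi fun _ : Fin n => gaussianReal 0 1) (i : Fin n) :
    MemLp (fun ω => Z ω i) 4 μ := by
  have hmp : MeasurePreserving (fun ω => Z ω i) μ (gaussianReal 0 1) :=
    (measurePreserving_eval (fun _ : Fin n => gaussianReal 0 1) i).comp ⟨hZ, hlaw⟩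
  exact (memLp_id_gaussianReal' 4 (by norm_num)).comp_measurePreserving hmp

end ConditionalMoments

/-- **Proposition 11 (fourth-moment bounds on the derivative of the MMSE).**
If `Tr(E[(XXᵀ)²]) < ∞` then `Tr(E[(Cov(X|Y))²])` is bounded by the minimum of
`Tr(E[((X−√snr·Z)(X−√snr·Z)ᵀ)²])/(1+snr)⁴` and `Tr(E[(E[XXᵀ|Y])²])`, and moreover
`Tr(E[(E[XXᵀ|Y])²]) ≤ Tr(E[(XXᵀ)²])`. -/
theorem derivative_mmse_fourth_moment_bound {Ω : Type*} [MeasurableSpace Ω] (μ : Measure Ω) [IsProbabilityMeasure μ]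
    (n : ℕ) (hn : 1 ≤ n) (X Z : Ω → Fin n → ℝ)
    (hX : Measurable X) (hZ : Measurable Z)
    (hZlaw : Measure.map Z μ = Measure.pi fun _ : Fin n => gaussianReal 0 1)
    (hindep : IndepFun X Z μ)
    (hX2 : Integrable (fun ω => ∑ i, (X ω i) ^ 2) μ)
    (snr : ℝ) (hsnr : 0 < snr)
    (hX4 : Integrable (fun ω => Matrix.trace ((Matrix.vecMulVec (X ω) (X ω)) ^ 2)) μ) :
    trExp μ (fun ω => (covMat (obsSigma X Z snr) μ X ω) ^ 2) ≤
      min ((trExp μ (fun ω =>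
              (Matrix.vecMulVec (fun i => X ω i - Real.sqrt snr * Z ω i)
                (fun i => X ω i - Real.sqrt snr * Z ω i)) ^ 2)) / (1 + snr) ^ 4)
          (trExp μ (fun ω =>
              (ceMat (obsSigma X Z snr) μ (fun ω' => Matrix.vecMulVec (X ω') (X ω')) ω) ^ 2)) ∧
    trExp μ (fun ω =>
        (ceMat (obsSigma X Z snr) μ (fun ω' => Matrix.vecMulVec (X ω') (X ω')) ω) ^ 2) ≤
      trExp μ (fun ω => (Matrix.vecMulVec (X ω) (X ω)) ^ 2) := by
  have hX4' : ∀ i, MemLp (fun ω => X ω i) 4 μ := memLp_four_of_integrable_trace hX hX4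
  have hZ4 : ∀ i, MemLp (fun ω => Z ω i) 4 μ := memLp_four_of_map_eq_pi_gaussianReal hZ hZlaw
  have hobs : Measurable (obs X Z snr) := by
    unfold obs
    fun_prop
  have hm : obsSigma X Z snr ≤ ‹MeasurableSpace Ω› := hobs.comap_le
  have hV4 (i : Fin n) : MemLp (fun ω => X ω i - √snr * Z ω i) 4 μ :=
    (hX4' i).sub ((hZ4 i).const_mul _)
  have hW4 (i : Fin n) : MemLp (fun ω => √snr * obs X Z snr ω i) 4 μ :=
    (((hX4' i).const_mul _).add (hZ4 i)).const_mul _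
  have hWm (i : Fin n) :
      StronglyMeasurable[obsSigma X Z snr] (fun ω => √snr * obs X Z snr ω i) :=
    ((measurable_pi_apply i).comp (comap_measurable (obs X Z snr))).stronglyMeasurable.const_mul _
  have hdecomp : X = fun ω i =>
      (1 + snr)⁻¹ * ((X ω i - √snr * Z ω i) + √snr * obs X Z snr ω i) := by
    funext ω i
    rw [eq_inv_mul_iff_mul_eq₀ (by positivity), obs]
    linear_combination (-X ω i) * Real.mul_self_sqrt hsnr.le
  have hcov : trExp μ (fun ω => covMat (obsSigma X Z snr) μ X ω ^ 2) =
      ((1 + snr) ^ 4)⁻¹ * trExp μ (fun ω =>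
        covMat (obsSigma X Z snr) μ (fun ω i => X ω i - √snr * Z ω i) ω ^ 2) := by
    rw [← trExp_smul]
    refine trExp_congr_ae ?_
    have hae := covMat_const_mul_add hm (1 + snr)⁻¹
      (V := fun ω i => X ω i - √snr * Z ω i) (W := fun ω i => √snr * obs X Z snr ω i)
      (fun i => (hV4 i).mono_exponent (by norm_num))
      (fun i => (hW4 i).mono_exponent (by norm_num)) hWm
    rw [← hdecomp] at hae
    filter_upwards [hae] with ω hω
    rw [hω, smul_pow, ← pow_mul, inv_pow]
  refine ⟨le_min ?_ (trExp_sq_covMat_le hm hX4'), trExp_sq_ceMat_le hm hX4'⟩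
  rw [hcov, div_eq_inv_mul]
  exact mul_le_mul_of_nonneg_left
    ((trExp_sq_covMat_le hm hV4).trans (trExp_sq_ceMat_le hm hV4)) (by positivity)


end
end
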